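/- The real beta-hypergeometric family is identifiable: if a, a', b, a₁, a₁', b₁ > 0 and μ_{a,a',b} = μ_{a₁,a₁',b₁} as probability measures on (0,1), then (a, a', b) = (a₁, a₁', b₁). -/

import Mathlib

open MeasureTheory ProbabilityTheory Real Set Filter Topology

noncomputable def gammaDens (p σ y : ℝ) : ℝ :=
  if 0 < y then σ ^ p / Real.Gamma p * Real.exp (-(σ * y)) * y ^ (p - 1) else 0

noncomputable def gammaM (p σ : ℝ) : Measure ℝ :=
  MeasureTheory.volume.withDensity fun y => ENNReal.ofReal (gammaDens p σ y)

noncomputable def beta1Dens (p q x : ℝ) : ℝ :=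
  if 0 < x ∧ x < 1 then
    Real.Gamma (p + q) / (Real.Gamma p * Real.Gamma q) * x ^ (p - 1) * (1 - x) ^ (q - 1)
  else 0

noncomputable def beta1 (p q : ℝ) : Measure ℝ :=
  MeasureTheory.volume.withDensity fun x => ENNReal.ofReal (beta1Dens p q x)

noncomputable def beta2Dens (p q y : ℝ) : ℝ :=
  if 0 < y then
    Real.Gamma (p + q) / (Real.Gamma p * Real.Gamma q) * y ^ (p - 1) * (1 + y) ^ (-(p + q))
  else 0

noncomputable def beta2 (p q : ℝ) : Measure ℝ :=
  MeasureTheory.volume.withDensity fun y => ENNReal.ofReal (beta2Dens p q y)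

/-- Pochhammer (rising factorial) symbol `(a)_n`. -/
noncomputable def poch (a : ℝ) (n : ℕ) : ℝ := ∏ i ∈ Finset.range n, (a + (i : ℝ))

/-- Gauss hypergeometric function `₂F₁(a,b;c;x)`. -/
noncomputable def F21 (a b c x : ℝ) : ℝ :=
  ∑' n : ℕ, poch a n * poch b n / ((n.factorial : ℝ) * poch c n) * x ^ n

/-- Generalized hypergeometric `₃F₂(a₁,a₂,a₃;b₁,b₂;1)` at unit argument. -/
noncomputable def F32one (a1 a2 a3 b1 b2 : ℝ) : ℝ :=
  ∑' n : ℕ, poch a1 n * poch a2 n * poch a3 n /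
    ((n.factorial : ℝ) * poch b1 n * poch b2 n)

/-- Normalizing constant of the real beta-hypergeometric distribution. -/
noncomputable def Cbh (a a' b : ℝ) : ℝ :=
  Real.Gamma (a + b) / (Real.Gamma a * Real.Gamma b * F32one a a b (a + b) (a + a'))

noncomputable def bhDens (a a' b x : ℝ) : ℝ :=
  if 0 < x ∧ x < 1 then
    Cbh a a' b * x ^ (a - 1) * (1 - x) ^ (b - 1) * F21 a b (a + a') x
  else 0

/-- The real beta-hypergeometric distribution `μ_{a,a',b}`. -/
noncomputable def bhMeasure (a a' b : ℝ) : Measure ℝ :=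
  MeasureTheory.volume.withDensity fun x => ENNReal.ofReal (bhDens a a' b x)

/-! The function `H_{a,a',b}(x) = (1 - x)^b ₂F₁(a,b;a+a';x)` satisfies `H_{a,a',b}(0) = 1` and
`(1 - x)² H_{a,a',b}'(x) = -κ H_{a,a'+1,b+1}(x)` with `κ = a' b / (a + a')`. The density of
`μ_{a,a',b}` is `x^(a-1) · C H_{a,a',b}(x) / (1 - x)`, so its behaviour as `x → 0⁺` determines first
`a`, then `C`, and hence the function `H_{a,a',b}`. Differentiating an equality
`H_{a,u,b} = H_{a,v,e}` and letting `x → 0⁺` gives equality of the constants `κ`, and therefore an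
equality of the same kind with `u, b, v, e` raised by one. Three differentiations yield
`(u+k)(b+k)/(a+u+k) = (v+k)(e+k)/(a+v+k)` for `k = 0, 1, 2`. With denominators cleared, the two
sides differ by a polynomial of degree at most two in `k`, which must vanish identically; this
forces `u = v` and `b = e`. -/

open Asymptotics

section Pochhammer

lemma poch_zero (s : ℝ) : poch s 0 = 1 := Finset.prod_range_zero _

lemma poch_succ (s : ℝ) (n : ℕ) : poch s (n + 1) = poch s n * (s + n) :=
  Finset.prod_range_succ _ _

lemma poch_succ_left (s : ℝ) (n : ℕ) : poch s (n + 1) = s * poch (s + 1) n := by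
  simp only [poch, Finset.prod_range_succ']
  push_cast
  rw [add_zero, mul_comm]
  congr 1
  exact Finset.prod_congr rfl fun i _ => by ring

lemma poch_eq_eval_ascPochhammer (s : ℝ) (n : ℕ) : poch s n = (ascPochhammer ℝ n).eval s := by
  induction n with
  | zero => simp [poch_zero]
  | succ n ih => rw [poch_succ, ih, ascPochhammer_succ_eval]

lemma poch_pos {s : ℝ} (hs : 0 < s) (n : ℕ) : 0 < poch s n :=
  poch_eq_eval_ascPochhammer s n ▸ ascPochhammer_pos n s hs

lemma poch_one (n : ℕ) : poch 1 n = n.factorial := by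
  rw [poch_eq_eval_ascPochhammer, Nat.cast_factorial]

lemma poch_eq_zero_iff {s : ℝ} {n : ℕ} : poch s n = 0 ↔ ∃ k < n, (k : ℝ) = -s := by
  rw [poch_eq_eval_ascPochhammer, ascPochhammer_eval_eq_zero_iff]

lemma poch_isTheta {s : ℝ} (hs : ∀ m : ℕ, s ≠ -m) :
    (fun n => poch s (n + 1)) =Θ[atTop] fun n : ℕ => (n : ℝ) ^ s * n.factorial := by
  have hΓ : (fun n => Real.GammaSeq s n) =Θ[atTop] fun _ => (1 : ℝ) :=
    .symm (isTheta_of_div_tendsto_nhds_ne_zero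
      (by simpa using Real.GammaSeq_tendsto_Gamma s) (Real.Gamma_ne_zero hs))
  have hdiv : (fun n => poch s (n + 1)) =ᶠ[atTop]
      fun n : ℕ => (n : ℝ) ^ s * n.factorial / Real.GammaSeq s n := by
    filter_upwards [eventually_gt_atTop 0] with n hn
    have : (n : ℝ) ^ s * n.factorial ≠ 0 := by positivity
    exact (div_div_cancel₀ this).symm
  simpa using hdiv.trans_isTheta ((isTheta_refl _ _).div hΓ)

lemma poch_neg_nat_eventuallyEq_zero (m : ℕ) :
    (fun n => poch (-m) (n + 1)) =ᶠ[atTop] fun _ => 0 := by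
  filter_upwards [eventually_ge_atTop m] with n hn
  exact poch_eq_zero_iff.2 ⟨m, by omega, by simp⟩

lemma poch_isBigO (s : ℝ) :
    (fun n => poch s (n + 1)) =O[atTop] fun n : ℕ => (n : ℝ) ^ s * n.factorial := by
  by_cases hs : ∃ m : ℕ, s = -m
  · obtain ⟨m, rfl⟩ := hs
    exact (poch_neg_nat_eventuallyEq_zero m).trans_isBigO (isBigO_zero _ _)
  · exact (poch_isTheta (not_exists.1 hs)).isBigO

lemma poch_inv_isBigO (s : ℝ) :
    (fun n => (poch s (n + 1))⁻¹) =O[atTop] fun n : ℕ => ((n : ℝ) ^ s * n.factorial)⁻¹ := by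
  by_cases hs : ∃ m : ℕ, s = -m
  · obtain ⟨m, rfl⟩ := hs
    refine EventuallyEq.trans_isBigO ?_ (isBigO_zero _ _)
    filter_upwards [poch_neg_nat_eventuallyEq_zero m] with n hn using by rw [hn, inv_zero]
  · exact (poch_isTheta (not_exists.1 hs)).inv.isBigO

end Pochhammer

section F32

lemma summable_F32one {a₁ a₂ a₃ b₁ b₂ : ℝ} (h : a₁ + a₂ + a₃ < b₁ + b₂) :
    Summable fun n : ℕ => poch a₁ n * poch a₂ n * poch a₃ n /
      ((n.factorial : ℝ) * poch b₁ n * poch b₂ n) := by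
  rw [← summable_nat_add_iff 1]
  have hO := (((poch_isBigO a₁).mul (poch_isBigO a₂)).mul (poch_isBigO a₃)).mul
    (((poch_inv_isBigO 1).mul (poch_inv_isBigO b₁)).mul (poch_inv_isBigO b₂))
  refine summable_of_isBigO_nat (g := fun n : ℕ => (n : ℝ) ^ (a₁ + a₂ + a₃ - 1 - b₁ - b₂))
    (Real.summable_nat_rpow.2 (by linarith)) ((hO.congr_left fun n => ?_).congr' .rfl ?_)
  · rw [poch_one, div_eq_mul_inv, mul_inv, mul_inv]
  · filter_upwards [eventually_gt_atTop 0] with n hn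
    have hn' : (0 : ℝ) < n := by exact_mod_cast hn
    simp only [Real.rpow_sub hn', Real.rpow_add hn']
    field_simp

lemma F32one_pos {a₁ a₂ a₃ b₁ b₂ : ℝ} (ha₁ : 0 < a₁) (ha₂ : 0 < a₂) (ha₃ : 0 < a₃)
    (hb₁ : 0 < b₁) (hb₂ : 0 < b₂) (h : a₁ + a₂ + a₃ < b₁ + b₂) :
    0 < F32one a₁ a₂ a₃ b₁ b₂ := by
  have hterm (n : ℕ) : 0 < poch a₁ n * poch a₂ n * poch a₃ n /
      ((n.factorial : ℝ) * poch b₁ n * poch b₂ n) := by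
    have := poch_pos ha₁ n
    have := poch_pos ha₂ n
    have := poch_pos ha₃ n
    have := poch_pos hb₁ n
    have := poch_pos hb₂ n
    positivity
  exact (summable_F32one h).tsum_pos (fun n => (hterm n).le) 0 (hterm 0)

end F32

section PowerSeries

lemma mem_eball_zero_one {x : ℝ} (hx : |x| < 1) : x ∈ Metric.eball (0 : ℝ) 1 := by
  simpa [← ENNReal.ofReal_one, Metric.eball_ofReal] using hx

lemma hasSum_deriv_of_hasFPowerSeriesOnBall {𝕜 F : Type*} [NontriviallyNormedField 𝕜]
    [NormedAddCommGroup F] [NormedSpace 𝕜 F] [CompleteSpace F] {f : 𝕜 → F}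
    {p : FormalMultilinearSeries 𝕜 𝕜 F} {x y : 𝕜} {r : ENNReal}
    (hf : HasFPowerSeriesOnBall f p x r) (hy : y ∈ Metric.eball 0 r) :
    HasSum (fun n => y ^ n • (n + 1) • p.coeff (n + 1)) (deriv f (x + y)) := by
  have h := (hf.fderiv.hasSum hy).mapL (ContinuousLinearMap.apply 𝕜 F 1)
  simpa using h

end PowerSeries

section F21

/-- The coefficient of `x ^ n` in the Gauss hypergeometric series `₂F₁(a,b;c;x)`. It is `0` as soon
as one of `a`, `b`, `c` is a nonpositive integer greater than `-n`. -/
noncomputable def F21Coeff (a b c : ℝ) (n : ℕ) : ℝ :=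
  poch a n * poch b n / ((n.factorial : ℝ) * poch c n)

lemma F21Coeff_eq_ordinaryHypergeometricCoefficient (a b c : ℝ) :
    F21Coeff a b c = ordinaryHypergeometricCoefficient a b c := by
  funext n
  simp only [F21Coeff, ordinaryHypergeometricCoefficient, poch_eq_eval_ascPochhammer]
  rw [div_eq_mul_inv, mul_inv]
  ring

lemma one_le_radius_ordinaryHypergeometricSeries (a b c : ℝ) :
    1 ≤ (ordinaryHypergeometricSeries ℝ a b c).radius := by
  by_cases h : ∀ k : ℕ, (k : ℝ) ≠ -a ∧ (k : ℝ) ≠ -b ∧ (k : ℝ) ≠ -c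
  · exact (ordinaryHypergeometricSeries_radius_eq_one ℝ a b c h).ge
  · obtain ⟨k, hk⟩ : ∃ k : ℕ, a = -k ∨ b = -k ∨ c = -k := by
      simpa only [not_forall, not_and_or, not_not, eq_neg_iff_add_eq_zero, add_comm] using h
    suffices (ordinaryHypergeometricSeries ℝ a b c).radius = ⊤ from this ▸ le_top
    rcases hk with rfl | rfl | rfl
    · exact ordinaryHypergeometric_radius_top_of_neg_nat₁ ℝ b c
    · exact ordinaryHypergeometric_radius_top_of_neg_nat₂ ℝ a c
    · exact ordinaryHypergeometric_radius_top_of_neg_nat₃ ℝ a b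

lemma F21_hasFPowerSeriesOnBall (a b c : ℝ) :
    HasFPowerSeriesOnBall (F21 a b c) (ordinaryHypergeometricSeries ℝ a b c) 0 1 := by
  have hsum : F21 a b c = (ordinaryHypergeometricSeries ℝ a b c).sum := by
    funext x
    simp only [F21, FormalMultilinearSeries.sum, ordinaryHypergeometricSeries,
      FormalMultilinearSeries.ofScalars_apply_eq, smul_eq_mul,
      ← F21Coeff_eq_ordinaryHypergeometricCoefficient, F21Coeff]
  have hr := one_le_radius_ordinaryHypergeometricSeries a b c
  exact hsum ▸ (FormalMultilinearSeries.hasFPowerSeriesOnBall _ (one_pos.trans_le hr)).mono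
    one_pos hr

lemma F21_hasSum (a b c : ℝ) {x : ℝ} (hx : |x| < 1) :
    HasSum (fun n => F21Coeff a b c n * x ^ n) (F21 a b c x) := by
  have h := (F21_hasFPowerSeriesOnBall a b c).hasSum (mem_eball_zero_one hx)
  simpa [ordinaryHypergeometricSeries, FormalMultilinearSeries.ofScalars_apply_eq,
    ← F21Coeff_eq_ordinaryHypergeometricCoefficient, mul_comm] using h

lemma F21_hasSum_deriv (a b c : ℝ) {x : ℝ} (hx : |x| < 1) :
    HasSum (fun n : ℕ => (n + 1) * F21Coeff a b c (n + 1) * x ^ n) (deriv (F21 a b c) x) := by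
  have h := hasSum_deriv_of_hasFPowerSeriesOnBall (F21_hasFPowerSeriesOnBall a b c)
    (mem_eball_zero_one hx)
  simpa [ordinaryHypergeometricSeries, FormalMultilinearSeries.coeff_ofScalars,
    ← F21Coeff_eq_ordinaryHypergeometricCoefficient, mul_comm] using h

lemma F21_zero (a b c : ℝ) : F21 a b c 0 = 1 :=
  (tsum_eq_single 0 fun n hn => by simp [hn]).trans (by simp [poch_zero])

lemma F21_differentiableAt (a b c : ℝ) {x : ℝ} (hx : |x| < 1) :
    DifferentiableAt ℝ (F21 a b c) x :=
  ((F21_hasFPowerSeriesOnBall a b c).analyticAt_of_mem (mem_eball_zero_one hx)).differentiableAt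

lemma F21_nonneg {a b c x : ℝ} (ha : 0 < a) (hb : 0 < b) (hc : 0 < c) (hx : 0 ≤ x) :
    0 ≤ F21 a b c x :=
  tsum_nonneg fun n => by
    have := poch_pos ha n
    have := poch_pos hb n
    have := poch_pos hc n
    positivity

lemma F21Coeff_contiguous {c : ℝ} (hc : ∀ m : ℕ, c ≠ -m) (a b : ℝ) (n : ℕ) :
    (n + 1) * F21Coeff a b c (n + 1) - (n + b) * F21Coeff a b c n =
      -((c - a) * b / c) * F21Coeff a (b + 1) (c + 1) n := by
  have hcn : c + n ≠ 0 := fun h => hc n (eq_neg_of_add_eq_zero_left h)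
  have hc0 : c ≠ 0 := by simpa using hc 0
  have hpoch : poch c n ≠ 0 := fun h => by
    obtain ⟨k, -, hk⟩ := poch_eq_zero_iff.1 h
    exact hc k (neg_eq_iff_eq_neg.1 hk.symm)
  have hpoch' : poch (c + 1) n = poch c n * (c + n) / c := by
    rw [eq_div_iff hc0, ← poch_succ, poch_succ_left, mul_comm]
  have hb : b * poch (b + 1) n = poch b n * (b + n) := by rw [← poch_succ, poch_succ_left]
  have hrw : -((c - a) * b / c) * F21Coeff a (b + 1) (c + 1) n =
      -((c - a) / c) * (poch a n * (b * poch (b + 1) n) / (n.factorial * poch (c + 1) n)) := by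
    rw [F21Coeff]
    ring
  rw [hrw, hb, hpoch', F21Coeff, F21Coeff, poch_succ, poch_succ, poch_succ, Nat.factorial_succ]
  push_cast
  field_simp
  ring

lemma F21_deriv_contiguous {c : ℝ} (hc : ∀ m : ℕ, c ≠ -m) (a b : ℝ) {x : ℝ} (hx : |x| < 1) :
    (1 - x) * deriv (F21 a b c) x - b * F21 a b c x =
      -((c - a) * b / c) * F21 a (b + 1) (c + 1) x := by
  have hd := F21_hasSum_deriv a b c hx
  have hxd : HasSum (fun n : ℕ => n * F21Coeff a b c n * x ^ n) (x * deriv (F21 a b c) x) := by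
    refine (hasSum_nat_add_iff' 1).1 ?_
    simpa [pow_succ, mul_assoc, mul_comm, mul_left_comm] using hd.mul_left x
  have h := (hd.sub hxd).sub ((F21_hasSum a b c hx).mul_left b)
  have h' := (F21_hasSum a (b + 1) (c + 1) hx).mul_left (-((c - a) * b / c))
  rw [one_sub_mul]
  refine h.unique (h'.congr_fun fun n => ?_)
  linear_combination x ^ n * F21Coeff_contiguous hc a b n

end F21

section PfaffF21

/-- The function `(1 - x)^b ₂F₁(a,b;a+a';x)`, equal to `₂F₁(a',b;a+a';x/(x-1))` by Pfaff's
transformation. Up to the factor `x^(a-1) / (1 - x)` and a constant it is the density of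
`μ_{a,a',b}`. -/
noncomputable def pfaffF21 (a a' b x : ℝ) : ℝ := (1 - x) ^ b * F21 a b (a + a') x

lemma pfaffF21_zero (a a' b : ℝ) : pfaffF21 a a' b 0 = 1 := by simp [pfaffF21, F21_zero]

lemma pfaffF21_hasDerivAt {a a' : ℝ} (hc : ∀ m : ℕ, a + a' ≠ -m) (b : ℝ) {x : ℝ}
    (hx : |x| < 1) :
    HasDerivAt (pfaffF21 a a' b)
      (-(a' * b / (a + a')) * pfaffF21 a (a' + 1) (b + 1) x / (1 - x) ^ 2) x := by
  have hx1 : 0 < 1 - x := by linarith [(abs_lt.1 hx).2]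
  have hpow : HasDerivAt (fun y => (1 - y) ^ b) (-b * (1 - x) ^ (b - 1)) x := by
    simpa using ((hasDerivAt_id x).const_sub 1).rpow_const (p := b) (.inl hx1.ne')
  refine (hpow.mul (F21_differentiableAt a b (a + a') hx).hasDerivAt).congr_deriv ?_
  have hF := F21_deriv_contiguous hc a b hx
  rw [add_sub_cancel_left] at hF
  rw [pfaffF21, ← add_assoc a, Real.rpow_sub_one hx1.ne', Real.rpow_add_one hx1.ne']
  calc _ = (1 - x) ^ b / (1 - x) *
        ((1 - x) * deriv (F21 a b (a + a')) x - b * F21 a b (a + a') x) := by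
        field_simp
        ring
    _ = _ := by
        rw [hF]
        field_simp

lemma pfaffF21_tendsto_zero (a a' b : ℝ) :
    Tendsto (pfaffF21 a a' b) (𝓝[>] 0) (𝓝 1) := by
  have hpow : ContinuousAt (fun x : ℝ => (1 - x) ^ b) 0 :=
    ContinuousAt.rpow_const (by fun_prop) (by simp)
  have hF : ContinuousAt (F21 a b (a + a')) 0 :=
    (F21_differentiableAt a b (a + a') (by simp)).continuousAt
  have hcont : ContinuousAt (pfaffF21 a a' b) 0 := hpow.mul hF
  exact pfaffF21_zero a a' b ▸ hcont.tendsto.mono_left nhdsWithin_le_nhds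

lemma ratio_eq_and_pfaffF21_eqOn_succ {a u v b e : ℝ}
    (hu : ∀ m : ℕ, a + u ≠ -m) (hv : ∀ m : ℕ, a + v ≠ -m)
    (hu0 : u ≠ 0) (hb0 : b ≠ 0) (h : EqOn (pfaffF21 a u b) (pfaffF21 a v e) (Ioo 0 1)) :
    u * b / (a + u) = v * e / (a + v) ∧
      EqOn (pfaffF21 a (u + 1) (b + 1)) (pfaffF21 a (v + 1) (e + 1)) (Ioo 0 1) := by
  have hκ : u * b / (a + u) ≠ 0 :=
    div_ne_zero (mul_ne_zero hu0 hb0) (by simpa using hu 0)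
  have hderiv : EqOn (fun x => u * b / (a + u) * pfaffF21 a (u + 1) (b + 1) x)
      (fun x => v * e / (a + v) * pfaffF21 a (v + 1) (e + 1) x) (Ioo 0 1) := by
    intro x hx
    have hx' : |x| < 1 := abs_lt.2 ⟨by linarith [hx.1], hx.2⟩
    have hd := h.deriv isOpen_Ioo hx
    rw [(pfaffF21_hasDerivAt hu b hx').deriv, (pfaffF21_hasDerivAt hv e hx').deriv,
      div_left_inj' (pow_ne_zero 2 (sub_pos.2 hx.2).ne'), neg_mul, neg_mul, neg_inj] at hd
    exact hd
  have hconst : u * b / (a + u) = v * e / (a + v) := by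
    have hl := (pfaffF21_tendsto_zero a (u + 1) (b + 1)).const_mul (u * b / (a + u))
    have hr := (pfaffF21_tendsto_zero a (v + 1) (e + 1)).const_mul (v * e / (a + v))
    simpa using tendsto_nhds_unique_of_eventuallyEq hl hr
      (eventually_of_mem (Ioo_mem_nhdsGT one_pos) hderiv)
  exact ⟨hconst, fun x hx => mul_left_cancel₀ hκ (hconst ▸ hderiv hx)⟩

lemma eq_of_shifted_ratio_eq {a u v b e : ℝ} (ha : a ≠ 0) (hb : b ≠ 0)
    (hu : ∀ k : ℕ, k < 3 → a + u + k ≠ 0) (hv : ∀ k : ℕ, k < 3 → a + v + k ≠ 0)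
    (h : ∀ k : ℕ, k < 3 →
      (u + k) * (b + k) / (a + u + k) = (v + k) * (e + k) / (a + v + k)) :
    u = v ∧ b = e := by
  have hcross (k : ℕ) (hk : k < 3) :
      (u + k) * (b + k) * (a + v + k) = (v + k) * (e + k) * (a + u + k) :=
    (div_eq_div_iff (hu k hk) (hv k hk)).1 (h k hk)
  have h₀ := hcross 0 (by norm_num)
  have h₁ := hcross 1 (by norm_num)
  have h₂ := hcross 2 (by norm_num)
  push_cast at h₀ h₁ h₂
  have hbe : b = e := by linear_combination (h₀ - 2 * h₁ + h₂) / 2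
  subst hbe
  have huv : a * b * (u - v) = 0 := by linear_combination h₀
  exact ⟨sub_eq_zero.1 ((mul_eq_zero.1 huv).resolve_left (mul_ne_zero ha hb)), rfl⟩

lemma eq_and_eq_of_pfaffF21_eqOn {a u v b e : ℝ} (ha : 0 < a) (hu : 0 < u) (hv : 0 < v) (hb : 0 < b)
    (h : EqOn (pfaffF21 a u b) (pfaffF21 a v e) (Ioo 0 1)) : u = v ∧ b = e := by
  have hpole {w : ℝ} (hw : 0 < w) (m : ℕ) : a + w ≠ -m := by
    have : (0 : ℝ) ≤ m := m.cast_nonneg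
    linarith
  have hshift (k : ℕ) :
      EqOn (pfaffF21 a (u + k) (b + k)) (pfaffF21 a (v + k) (e + k)) (Ioo 0 1) := by
    induction k with
    | zero => simpa using h
    | succ k ih =>
      have := (ratio_eq_and_pfaffF21_eqOn_succ (hpole (by positivity))
        (hpole (by positivity)) (by positivity) (by positivity) ih).2
      simpa only [Nat.cast_succ, add_assoc] using this
  refine eq_of_shifted_ratio_eq ha.ne' hb.ne' (fun k _ => by positivity) (fun k _ => by positivity)
    fun k _ => ?_
  simpa only [add_assoc] using (ratio_eq_and_pfaffF21_eqOn_succ (hpole (by positivity))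
    (hpole (by positivity)) (by positivity) (by positivity) (hshift k)).1

end PfaffF21

section LeadingPower

lemma le_of_rpow_mul_eventuallyEq {p q c d : ℝ} {f g : ℝ → ℝ}
    (hf : Tendsto f (𝓝[>] 0) (𝓝 c)) (hg : Tendsto g (𝓝[>] 0) (𝓝 d)) (hc : c ≠ 0)
    (h : (fun x => x ^ p * f x) =ᶠ[𝓝[>] 0] fun x => x ^ q * g x) : q ≤ p := by
  by_contra! hpq
  have hpow : Tendsto (fun x : ℝ => x ^ (q - p)) (𝓝[>] 0) (𝓝 0) := by
    have := (Real.continuousAt_rpow_const 0 (q - p) (.inr (sub_nonneg.2 hpq.le))).tendsto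
    rw [Real.zero_rpow (sub_pos.2 hpq).ne'] at this
    exact this.mono_left nhdsWithin_le_nhds
  have hfg : f =ᶠ[𝓝[>] 0] fun x => x ^ (q - p) * g x := by
    filter_upwards [h, self_mem_nhdsWithin] with x hx (hx0 : 0 < x)
    have hxp : x ^ p ≠ 0 := (Real.rpow_pos_of_pos hx0 p).ne'
    rw [Real.rpow_sub hx0, div_mul_eq_mul_div, ← hx, mul_div_cancel_left₀ _ hxp]
  exact hc (by simpa using tendsto_nhds_unique_of_eventuallyEq hf (hpow.mul hg) hfg)

lemma eq_of_rpow_mul_eventuallyEq {p q c d : ℝ} {f g : ℝ → ℝ}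
    (hf : Tendsto f (𝓝[>] 0) (𝓝 c)) (hg : Tendsto g (𝓝[>] 0) (𝓝 d)) (hc : c ≠ 0) (hd : d ≠ 0)
    (h : (fun x => x ^ p * f x) =ᶠ[𝓝[>] 0] fun x => x ^ q * g x) : p = q ∧ c = d := by
  obtain rfl : p = q := le_antisymm (le_of_rpow_mul_eventuallyEq hg hf hd h.symm)
    (le_of_rpow_mul_eventuallyEq hf hg hc h)
  refine ⟨rfl, tendsto_nhds_unique_of_eventuallyEq hf hg ?_⟩
  filter_upwards [h, self_mem_nhdsWithin] with x hx (hx0 : 0 < x)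
  exact mul_left_cancel₀ (Real.rpow_pos_of_pos hx0 p).ne' hx

end LeadingPower

section Density

lemma Cbh_pos {a a' b : ℝ} (ha : 0 < a) (ha' : 0 < a') (hb : 0 < b) : 0 < Cbh a a' b := by
  have hF : 0 < F32one a a b (a + b) (a + a') :=
    F32one_pos ha ha hb (by positivity) (by positivity) (by linarith)
  have := Real.Gamma_pos_of_pos ha
  have := Real.Gamma_pos_of_pos hb
  have := Real.Gamma_pos_of_pos (add_pos ha hb)
  unfold Cbh
  positivity

lemma bhDens_eq_rpow_mul_pfaffF21 (a a' b : ℝ) {x : ℝ} (hx : x ∈ Ioo 0 1) :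
    bhDens a a' b x = x ^ (a - 1) * (Cbh a a' b * pfaffF21 a a' b x / (1 - x)) := by
  rw [bhDens, if_pos ⟨hx.1, hx.2⟩, pfaffF21, Real.rpow_sub_one (sub_pos.2 hx.2).ne']
  ring

lemma bhDens_nonneg {a a' b : ℝ} (ha : 0 < a) (ha' : 0 < a') (hb : 0 < b) (x : ℝ) :
    0 ≤ bhDens a a' b x := by
  unfold bhDens
  split_ifs with hx
  · have := Cbh_pos ha ha' hb
    have := F21_nonneg ha hb (add_pos ha ha') hx.1.le
    have := hx.1
    have := sub_pos.2 hx.2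
    positivity
  · rfl

lemma continuousOn_bhDens (a a' b : ℝ) : ContinuousOn (bhDens a a' b) (Ioo 0 1) := by
  have hF : ContinuousOn (F21 a b (a + a')) (Ioo 0 1) := fun x hx =>
    (F21_differentiableAt a b (a + a')
      (abs_lt.2 ⟨by linarith [hx.1], hx.2⟩)).continuousAt.continuousWithinAt
  have hx : ContinuousOn (fun x : ℝ => x ^ (a - 1)) (Ioo 0 1) :=
    continuousOn_id.rpow_const fun x hx => .inl hx.1.ne'
  have hx1 : ContinuousOn (fun x : ℝ => (1 - x) ^ (b - 1)) (Ioo 0 1) :=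
    ContinuousOn.rpow_const (by fun_prop) fun x hx => .inl (sub_pos.2 hx.2).ne'
  exact (((continuousOn_const.mul hx).mul hx1).mul hF).congr fun x hx => if_pos hx

lemma aemeasurable_bhDens (a a' b : ℝ) : AEMeasurable (bhDens a a' b) := by
  have hsupp : (Ioo 0 1).indicator (bhDens a a' b) = bhDens a a' b :=
    indicator_eq_self.2 fun x hx => by
      by_contra hx'
      exact hx (if_neg hx')
  rw [← hsupp, aemeasurable_indicator_iff measurableSet_Ioo]
  exact (continuousOn_bhDens a a' b).aemeasurable measurableSet_Ioo

lemma bhDens_eqOn_of_bhMeasure_eq {a a' b a₁ a₁' b₁ : ℝ}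
    (ha : 0 < a) (ha' : 0 < a') (hb : 0 < b) (ha₁ : 0 < a₁) (ha₁' : 0 < a₁') (hb₁ : 0 < b₁)
    (h : bhMeasure a a' b = bhMeasure a₁ a₁' b₁) :
    EqOn (bhDens a a' b) (bhDens a₁ a₁' b₁) (Ioo 0 1) := by
  have hae := (withDensity_eq_iff_of_sigmaFinite (aemeasurable_bhDens a a' b).ennreal_ofReal
    (aemeasurable_bhDens a₁ a₁' b₁).ennreal_ofReal).1 h
  refine Measure.eqOn_open_of_ae_eq (μ := volume) (ae_restrict_of_ae ?_) isOpen_Ioo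
    (continuousOn_bhDens a a' b) (continuousOn_bhDens a₁ a₁' b₁)
  filter_upwards [hae] with x hx
  exact (ENNReal.ofReal_eq_ofReal_iff (bhDens_nonneg ha ha' hb x)
    (bhDens_nonneg ha₁ ha₁' hb₁ x)).1 hx

lemma eq_and_pfaffF21_eqOn_of_bhDens_eqOn {a a' b a₁ a₁' b₁ : ℝ} (hC : Cbh a a' b ≠ 0)
    (hC₁ : Cbh a₁ a₁' b₁ ≠ 0) (h : EqOn (bhDens a a' b) (bhDens a₁ a₁' b₁) (Ioo 0 1)) :
    a = a₁ ∧ EqOn (pfaffF21 a a' b) (pfaffF21 a₁ a₁' b₁) (Ioo 0 1) := by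
  have hlim (a a' b : ℝ) : Tendsto (fun x => Cbh a a' b * pfaffF21 a a' b x / (1 - x))
      (𝓝[>] 0) (𝓝 (Cbh a a' b)) := by
    have hsub : Tendsto (fun x : ℝ => 1 - x) (𝓝[>] 0) (𝓝 1) := by
      simpa using ((continuous_sub_left (1 : ℝ)).tendsto 0).mono_left nhdsWithin_le_nhds
    have := ((pfaffF21_tendsto_zero a a' b).const_mul (Cbh a a' b)).div hsub one_ne_zero
    rwa [mul_one, div_one] at this
  have hprod : EqOn (fun x => x ^ (a - 1) * (Cbh a a' b * pfaffF21 a a' b x / (1 - x)))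
      (fun x => x ^ (a₁ - 1) * (Cbh a₁ a₁' b₁ * pfaffF21 a₁ a₁' b₁ x / (1 - x))) (Ioo 0 1) :=
    fun x hx => by
      simpa only [bhDens_eq_rpow_mul_pfaffF21 _ _ _ hx] using h hx
  obtain ⟨hexp, hCC₁⟩ := eq_of_rpow_mul_eventuallyEq (hlim a a' b) (hlim a₁ a₁' b₁) hC hC₁
    (eventually_of_mem (Ioo_mem_nhdsGT one_pos) hprod)
  obtain rfl : a = a₁ := sub_left_injective hexp
  refine ⟨rfl, fun x hx => mul_left_cancel₀ hC ?_⟩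
  have hdiv := mul_left_cancel₀ (Real.rpow_pos_of_pos hx.1 (a - 1)).ne' (hprod hx)
  rwa [div_left_inj' (sub_pos.2 hx.2).ne', ← hCC₁] at hdiv

end Density

theorem bh_identifiable (a a' b a1 a1' b1 : ℝ)
    (ha : 0 < a) (ha' : 0 < a') (hb : 0 < b)
    (ha1 : 0 < a1) (ha1' : 0 < a1') (hb1 : 0 < b1)
    (h : bhMeasure a a' b = bhMeasure a1 a1' b1) :
    (a, a', b) = (a1, a1', b1) := by
  have hdens := bhDens_eqOn_of_bhMeasure_eq ha ha' hb ha1 ha1' hb1 h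
  obtain ⟨rfl, hpfaff⟩ := eq_and_pfaffF21_eqOn_of_bhDens_eqOn (Cbh_pos ha ha' hb).ne'
    (Cbh_pos ha1 ha1' hb1).ne' hdens
  obtain ⟨rfl, rfl⟩ := eq_and_eq_of_pfaffF21_eqOn ha ha' ha1' hb hpfaff
  rfl
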